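/- (Difference formula relating v-adic and ∞-adic multiple zeta values at negative integers.) Let r ≥ 1 and m_1,…,m_r ∈ ℤ_{≥0}. Then in A: ζ_v(−m_1,…,−m_r) − ζ_∞(−m_1,…,−m_r) = Σ_{l=0}^{r} (−1)^l · ζ_{<d}(−m_{l+1},…,−m_r) · [ Σ_{(a_1,…,a_l)} v^{a_1+⋯+a_l} · ζ_{<d}(−(m_1−a_1)) ⋯ ζ_{<d}(−(m_l−a_l)) · C(m_1,a_1) ⋯ C(m_l,a_l) · ζ_∞(−a_1,…,−a_l) ], where the inner sum runs over all integer tuples (a_1,…,a_l) with 0 ≤ a_j ≤ m_j, (q−1) | (m_j − a_j) for all 1 ≤ j ≤ l, and a_j = m_j for at least one j (in particular the l = 0 summand is 0). -/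

import Mathlib

open Polynomial

/-- The power sum `S_i(-m)`: the sum of `n ^ m` over monic polynomials `n` of degree `i`. -/
noncomputable def powerSum (F : Type*) [Field F] [Fintype F] (i m : ℕ) : Polynomial F :=
  ∑ᶠ n ∈ {n : Polynomial F | n.Monic ∧ n.natDegree = i}, n ^ m

/-- The restricted power sum `S̃_i(-m)`: the sum of `n ^ m` over monic polynomials `n` of
degree `i` not divisible by `v`. -/
noncomputable def powerSumV (F : Type*) [Field F] [Fintype F] (v : Polynomial F) (i m : ℕ) :
    Polynomial F :=
  ∑ᶠ n ∈ {n : Polynomial F | n.Monic ∧ n.natDegree = i ∧ ¬ v ∣ n}, n ^ m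

/-- `ζ_∞(-m_1, …, -m_r)`, the ∞-adic multiple zeta value at nonpositive integers:
the sum over `i_1 > ⋯ > i_r ≥ 0` of `S_{i_1}(-m_1) ⋯ S_{i_r}(-m_r)`.
Only `m 0, …, m (r-1)` are used.  The depth-0 value is `1`. -/
noncomputable def zetaInf (F : Type*) [Field F] [Fintype F] (r : ℕ) (m : ℕ → ℕ) :
    Polynomial F :=
  ∑ᶠ i ∈ {i : Fin r → ℕ | StrictAnti i}, ∏ j : Fin r, powerSum F (i j) (m (j : ℕ))

/-- `ζ⋆_∞(-m_1, …, -m_r)`, the ∞-adic multiple zeta star value at nonpositive integers: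
the sum over `i_1 ≥ ⋯ ≥ i_r ≥ 0` of `S_{i_1}(-m_1) ⋯ S_{i_r}(-m_r)`. -/
noncomputable def zetaInfStar (F : Type*) [Field F] [Fintype F] (r : ℕ) (m : ℕ → ℕ) :
    Polynomial F :=
  ∑ᶠ i ∈ {i : Fin r → ℕ | Antitone i}, ∏ j : Fin r, powerSum F (i j) (m (j : ℕ))

/-- `ζ_v(-m_1, …, -m_r)`, the v-adic multiple zeta value at nonpositive integers. -/
noncomputable def zetaV (F : Type*) [Field F] [Fintype F] (v : Polynomial F) (r : ℕ)
    (m : ℕ → ℕ) : Polynomial F :=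
  ∑ᶠ i ∈ {i : Fin r → ℕ | StrictAnti i}, ∏ j : Fin r, powerSumV F v (i j) (m (j : ℕ))

/-- `ζ⋆_v(-m_1, …, -m_r)`, the v-adic multiple zeta star value at nonpositive integers. -/
noncomputable def zetaVStar (F : Type*) [Field F] [Fintype F] (v : Polynomial F) (r : ℕ)
    (m : ℕ → ℕ) : Polynomial F :=
  ∑ᶠ i ∈ {i : Fin r → ℕ | Antitone i}, ∏ j : Fin r, powerSumV F v (i j) (m (j : ℕ))

/-- `ζ_{<d}(-m_1, …, -m_r)`, the truncated multiple zeta value: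
the sum over `d > i_1 > ⋯ > i_r ≥ 0` of `S_{i_1}(-m_1) ⋯ S_{i_r}(-m_r)`. -/
noncomputable def zetaLt (F : Type*) [Field F] [Fintype F] (d r : ℕ) (m : ℕ → ℕ) :
    Polynomial F :=
  ∑ᶠ i ∈ {i : Fin r → ℕ | StrictAnti i ∧ ∀ j, i j < d},
    ∏ j : Fin r, powerSum F (i j) (m (j : ℕ))

/-- `ζ⋆_{<d}(-m_1, …, -m_r)`, the truncated multiple zeta star value. -/
noncomputable def zetaLtStar (F : Type*) [Field F] [Fintype F] (d r : ℕ) (m : ℕ → ℕ) :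
    Polynomial F :=
  ∑ᶠ i ∈ {i : Fin r → ℕ | Antitone i ∧ ∀ j, i j < d},
    ∏ j : Fin r, powerSum F (i j) (m (j : ℕ))

/-- `ζ_{<d}(-m)`, the depth-one truncated zeta value `Σ_{d > i ≥ 0} S_i(-m)`. -/
noncomputable def zetaLtOne (F : Type*) [Field F] [Fintype F] (d m : ℕ) : Polynomial F :=
  ∑ᶠ i ∈ {i : ℕ | i < d}, powerSum F i m

open Finset in
/-- The sum over `N > i_0 > ⋯ > i_{r-1} ≥ 0` of `g 0 i_0 ⋯ g (r-1) i_{r-1}`. -/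
noncomputable def strictAntiSum {R : Type*} [CommRing R] (r : ℕ) (g : ℕ → ℕ → R) (N : ℕ) : R :=
  ∑ i ∈ (Fintype.piFinset fun _ : Fin r => range N) with StrictAnti i, ∏ j : Fin r, g j (i j)

section StrictAntiSum

open Finset

variable {R : Type*} [CommRing R]

lemma strictAntiSum_zero (g : ℕ → ℕ → R) (N : ℕ) : strictAntiSum 0 g N = 1 := by
  have h : ({i ∈ Fintype.piFinset fun _ : Fin 0 => range N | StrictAnti i}) = univ := by
    ext i
    simp [Subsingleton.strictAnti]
  rw [strictAntiSum, h]
  simp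

lemma strictAntiSum_succ (r : ℕ) (g : ℕ → ℕ → R) (N : ℕ) :
    strictAntiSum (r + 1) g N =
      ∑ k ∈ range N, g 0 k * strictAntiSum r (fun j => g (j + 1)) k := by
  simp only [strictAntiSum, mul_sum]
  rw [sum_sigma']
  refine sum_bij' (fun i _ => ⟨i 0, Fin.tail i⟩) (fun p _ => Fin.cons p.1 p.2) ?_ ?_ ?_ ?_ ?_
  · intro i hi
    simp only [mem_filter, Fintype.mem_piFinset, mem_range, mem_sigma] at hi ⊢
    exact ⟨hi.1 0, fun j => hi.2 (Fin.succ_pos j), fun a b hab => hi.2 (Fin.succ_lt_succ_iff.2 hab)⟩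
  · rintro ⟨k, i⟩ hi
    simp only [mem_filter, Fintype.mem_piFinset, mem_range, mem_sigma] at hi ⊢
    obtain ⟨hk, hi, ha⟩ := hi
    refine ⟨fun j => ?_, fun a b hab => ?_⟩
    · refine Fin.cases ?_ (fun j => ?_) j
      · simpa using hk
      · simpa using (hi j).trans hk
    · obtain ⟨b, rfl⟩ := Fin.exists_succ_eq.2 (Fin.ne_zero_of_lt hab)
      revert hab
      refine Fin.cases (fun _ => ?_) (fun a hab => ?_) a
      · simpa using hi b
      · simpa using ha (Fin.succ_lt_succ_iff.1 hab)
  · intro i _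
    simp
  · rintro ⟨k, i⟩ _
    simp
  · intro i _
    rw [Fin.prod_univ_succ]
    simp [Fin.tail]

lemma strictAntiSum_add (r : ℕ) (g : ℕ → ℕ → R) (N d : ℕ) :
    strictAntiSum r g (N + d) =
      ∑ l ∈ range (r + 1), strictAntiSum l (fun j i => g j (i + d)) N *
        strictAntiSum (r - l) (fun j => g (l + j)) d := by
  induction r generalizing g N with
  | zero => simp [strictAntiSum_zero]
  | succ r ih =>
    rw [sum_range_succ', strictAntiSum_zero, one_mul, strictAntiSum_succ, add_comm N d,
      sum_range_add, ← strictAntiSum_succ, add_comm]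
    congr 1
    · simp_rw [strictAntiSum_succ _ _ N, sum_mul]
      rw [sum_comm]
      refine sum_congr rfl fun k _ => ?_
      rw [add_comm d k, ih, mul_sum]
      refine sum_congr rfl fun l _ => ?_
      simp only [Nat.reduceSubDiff, mul_assoc, add_right_comm l 1, add_assoc l _ 1]
    · simp

lemma strictAntiSum_congr {r : ℕ} {g h : ℕ → ℕ → R} {N : ℕ}
    (H : ∀ j < r, ∀ i < N, g j i = h j i) : strictAntiSum r g N = strictAntiSum r h N := by
  refine sum_congr rfl fun i hi => prod_congr rfl fun j _ => H j j.2 _ ?_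
  simpa using (Fintype.mem_piFinset.1 (mem_filter.1 hi).1) j

lemma strictAntiSum_neg_sum_mul (l : ℕ) (s : ℕ → Finset ℕ) (c h : ℕ → ℕ → R) (N : ℕ) :
    strictAntiSum l (fun j i => -∑ a ∈ s j, c j a * h i a) N =
      (-1) ^ l * ∑ a ∈ Fintype.piFinset fun j : Fin l => s j,
        (∏ j : Fin l, c j (a j)) *
          ∑ i ∈ (Fintype.piFinset fun _ : Fin l => range N) with StrictAnti i,
            ∏ j : Fin l, h (i j) (a j) := by
  simp_rw [mul_sum _ _ (∏ j : Fin l, c j _)]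
  rw [sum_comm, mul_sum]
  refine sum_congr rfl fun i _ => ?_
  simp_rw [prod_neg, prod_univ_sum, prod_mul_distrib]
  simp

lemma finsum_strictAnti_eq (r : ℕ) (g : ℕ → ℕ → R) (N : ℕ)
    (H : ∀ j < r, ∀ i, N ≤ i → g j i = 0) :
    ∑ᶠ i ∈ {i : Fin r → ℕ | StrictAnti i}, ∏ j : Fin r, g j (i j) = strictAntiSum r g N := by
  rw [strictAntiSum]
  refine finsum_mem_eq_sum_of_inter_support_eq _ ?_
  ext i
  simp only [Set.mem_inter_iff, Set.mem_ofPred_eq, Function.mem_support, coe_filter,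
    Fintype.mem_piFinset, mem_range, and_congr_left_iff]
  intro hi
  refine ⟨fun hs => ⟨fun j => ?_, hs⟩, fun hs => hs.2⟩
  by_contra hj
  exact hi (prod_eq_zero (mem_univ j) (H j j.2 _ (not_lt.1 hj)))

end StrictAntiSum

section PowerSum

open Finset

variable {F : Type*} [Field F] [Fintype F]

lemma finite_setOf_degree_lt (d : ℕ) : {n : F[X] | n.degree < d}.Finite := by
  have : Finite (degreeLT F d) := Finite.of_equiv _ (degreeLTEquiv F d).toEquiv.symm
  exact (Set.toFinite (degreeLT F d : Set F[X])).subset fun n hn => mem_degreeLT.2 hn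

/-- The polynomials of degree less than `d`. -/
noncomputable def polysLT (F : Type*) [Field F] [Fintype F] (d : ℕ) : Finset F[X] :=
  (finite_setOf_degree_lt (F := F) d).toFinset

lemma mem_polysLT {d : ℕ} {n : F[X]} : n ∈ polysLT F d ↔ n.degree < d := by
  simp [polysLT]

open Classical in
/-- The monic polynomials of degree `i`. -/
noncomputable def monics (F : Type*) [Field F] [Fintype F] (i : ℕ) : Finset F[X] :=
  {n ∈ polysLT F (i + 1) | n.Monic ∧ n.natDegree = i}

lemma mem_monics {i : ℕ} {n : F[X]} : n ∈ monics F i ↔ n.Monic ∧ n.natDegree = i := by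
  simp only [monics, mem_filter, mem_polysLT, and_iff_right_iff_imp]
  rintro ⟨hn, rfl⟩
  exact lt_of_le_of_lt degree_le_natDegree (by exact_mod_cast Nat.lt_succ_self _)

lemma powerSum_eq_sum (i m : ℕ) : powerSum F i m = ∑ n ∈ monics F i, n ^ m := by
  rw [powerSum, ← finsum_mem_coe_finset]
  congr! 3
  simp [mem_monics]

open Classical in
lemma powerSumV_eq_sum (v : F[X]) (i m : ℕ) :
    powerSumV F v i m = ∑ n ∈ monics F i with ¬ v ∣ n, n ^ m := by
  rw [powerSumV, ← finsum_mem_coe_finset]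
  congr! 3
  simp [mem_monics, and_assoc]

lemma sum_polysLT_pow (d k : ℕ) (hk : 0 < k) :
    ∑ c ∈ polysLT F d, c ^ k =
      if Fintype.card F - 1 ∣ k then -zetaLtOne F d k else 0 := by
  classical
  have hzeta : zetaLtOne F d k = ∑ n ∈ polysLT F d with n.Monic, n ^ k := by
    have hmaps : ∀ n ∈ ({n ∈ polysLT F d | n.Monic}), n.natDegree ∈ range d := by
      intro n hn
      rw [mem_filter, mem_polysLT] at hn
      exact mem_range.2 ((natDegree_lt_iff_degree_lt hn.2.ne_zero).2 hn.1)
    have hrange : {i : ℕ | i < d} = ↑(range d) := by ext; simp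
    rw [← sum_fiberwise_of_maps_to hmaps, zetaLtOne, hrange, finsum_mem_coe_finset]
    refine sum_congr rfl fun i hi => ?_
    rw [powerSum_eq_sum]
    congr 1
    ext n
    simp only [mem_monics, mem_filter, mem_polysLT]
    refine ⟨fun h => ⟨⟨?_, h.1⟩, h.2⟩, fun h => ⟨h.1.2, h.2⟩⟩
    rw [← natDegree_lt_iff_degree_lt h.1.ne_zero, h.2]
    exact mem_range.1 hi
  have hunits : ∑ c ∈ polysLT F d with c ≠ 0, c ^ k =
      ∑ p ∈ (univ : Finset Fˣ) ×ˢ {n ∈ polysLT F d | n.Monic},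
        C ((p.1 : F) ^ k) * p.2 ^ k := by
    symm
    refine sum_bij (fun p _ => C (p.1 : F) * p.2) ?_ ?_ ?_ ?_
    · rintro ⟨u, n⟩ hp
      simp only [mem_product, mem_filter, mem_polysLT, mem_univ, true_and] at hp ⊢
      rw [degree_C_mul u.ne_zero]
      exact ⟨hp.1, mul_ne_zero (C_ne_zero.2 u.ne_zero) hp.2.ne_zero⟩
    · rintro ⟨u, n⟩ hp ⟨u', n'⟩ hp' h
      simp only [mem_product, mem_filter, mem_polysLT, mem_univ, true_and] at hp hp' h
      have hu : (u : F) = u' := by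
        simpa [hp.2.leadingCoeff, hp'.2.leadingCoeff] using congrArg leadingCoeff h
      obtain rfl := Units.ext hu
      simpa using h
    · intro c hc
      simp only [mem_filter, mem_polysLT] at hc
      have hl : c.leadingCoeff ≠ 0 := leadingCoeff_ne_zero.2 hc.2
      refine ⟨(Units.mk0 _ hl, c * C c.leadingCoeff⁻¹), ?_, ?_⟩
      · simp only [mem_product, mem_filter, mem_polysLT, mem_univ, true_and]
        rw [degree_mul_leadingCoeff_inv c hc.2]
        exact ⟨hc.1, monic_mul_leadingCoeff_inv hc.2⟩
      · rw [Units.val_mk0, mul_left_comm, ← C_mul, mul_inv_cancel₀ hl, C_1, mul_one]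
    · rintro ⟨u, n⟩ _
      rw [mul_pow, C_pow]
  have hne : ∑ c ∈ polysLT F d, c ^ k = ∑ c ∈ polysLT F d with c ≠ 0, c ^ k := by
    symm
    refine sum_filter_of_ne fun c _ hc h0 => hc ?_
    rw [h0, zero_pow hk.ne']
  rw [hne, hunits, sum_product, hzeta]
  simp_rw [← mul_sum]
  rw [← sum_mul, ← map_sum, FiniteField.sum_pow_units]
  split_ifs <;> simp

lemma card_polysLT (d : ℕ) : (polysLT F d).card = Fintype.card F ^ d := by
  have h : (polysLT F d : Set F[X]) = (degreeLT F d : Set F[X]) := by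
    ext n
    simp [mem_polysLT, mem_degreeLT]
  rw [← Set.ncard_coe_finset, h, ← Nat.card_coe_set_eq]
  simpa using Nat.card_congr (degreeLTEquiv F d).toEquiv

lemma sum_monics_add {v : F[X]} (hv : v.Monic) (i : ℕ) (f : F[X] → F[X]) :
    ∑ n ∈ monics F (i + v.natDegree), f n =
      ∑ b ∈ monics F i, ∑ c ∈ polysLT F v.natDegree, f (v * b + c) := by
  rw [← sum_product']
  symm
  have hdeg : ∀ c ∈ polysLT F v.natDegree, c.degree < v.degree := fun c hc => by
    rw [degree_eq_natDegree hv.ne_zero]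
    exact mem_polysLT.1 hc
  refine sum_bij' (fun p _ => v * p.1 + p.2) (fun n _ => (n /ₘ v, n %ₘ v)) ?_ ?_ ?_ ?_ ?_
  · rintro ⟨b, c⟩ hp
    obtain ⟨hb, hc⟩ := mem_product.1 hp
    have hc := hdeg c hc
    rw [mem_monics] at hb ⊢
    have hlt : c.degree < (v * b).degree := by
      refine hc.trans_le ?_
      rw [hb.1.degree_mul, degree_eq_natDegree hb.1.ne_zero]
      exact le_add_of_nonneg_right (Nat.cast_nonneg _)
    refine ⟨(hv.mul hb.1).add_of_left hlt, ?_⟩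
    rw [natDegree_add_eq_left_of_degree_lt hlt, hv.natDegree_mul hb.1, hb.2, add_comm]
  · intro n hn
    rw [mem_monics] at hn
    rw [mem_product, mem_monics, mem_polysLT, ← degree_eq_natDegree hv.ne_zero]
    refine ⟨⟨?_, ?_⟩, degree_modByMonic_lt n hv⟩
    · refine (leadingCoeff_divByMonic_of_monic hv ?_).trans hn.1
      rw [degree_eq_natDegree hv.ne_zero, degree_eq_natDegree hn.1.ne_zero, hn.2]
      exact_mod_cast Nat.le_add_left _ _
    · simp [natDegree_divByMonic n hv, hn.2]
  · rintro ⟨b, c⟩ hp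
    have hc := hdeg c (mem_product.1 hp).2
    have := div_modByMonic_unique b c hv ⟨add_comm _ _, hc⟩
    exact Prod.ext this.1 this.2
  · intro n _
    simp only
    rw [add_comm, modByMonic_add_div]
  · intro p _
    rfl

/-- The coefficient of `S_i(-a)` in the expansion of `S̃_{i+d}(-m)`. -/
noncomputable def powerSumCoeff (v : F[X]) (m a : ℕ) : F[X] :=
  v ^ a * (zetaLtOne F v.natDegree (m - a) * (m.choose a : F[X]))

lemma powerSum_add {v : F[X]} (hv : v.Monic) (hd : 0 < v.natDegree) (i m : ℕ) :
    powerSum F (i + v.natDegree) m =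
      -∑ a ∈ range m with Fintype.card F - 1 ∣ m - a,
        powerSumCoeff v m a * powerSum F i a := by
  have hcard : ((polysLT F v.natDegree).card : F[X]) = 0 := by
    rw [card_polysLT, Nat.cast_pow, ← C_eq_natCast, FiniteField.cast_card_eq_zero, C_0,
      zero_pow hd.ne']
  rw [powerSum_eq_sum, sum_monics_add hv]
  simp_rw [add_pow, powerSum_eq_sum]
  calc _ = ∑ b ∈ monics F i, ∑ a ∈ range (m + 1),
        (v * b) ^ a * (∑ c ∈ polysLT F v.natDegree, c ^ (m - a)) * (m.choose a : F[X]) := by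
        refine sum_congr rfl fun b _ => ?_
        rw [sum_comm]
        simp_rw [mul_sum, sum_mul]
    _ = ∑ b ∈ monics F i, ∑ a ∈ range m,
        (v * b) ^ a * (∑ c ∈ polysLT F v.natDegree, c ^ (m - a)) * (m.choose a : F[X]) := by
        refine sum_congr rfl fun b _ => ?_
        rw [sum_range_succ]
        simp [hcard]
    _ = _ := by
        rw [sum_comm, sum_filter, ← sum_neg_distrib]
        refine sum_congr rfl fun a ha => ?_
        rw [sum_polysLT_pow _ _ (Nat.sub_pos_of_lt (mem_range.1 ha))]
        split_ifs
        · rw [powerSumCoeff, mul_sum, ← sum_neg_distrib]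
          refine sum_congr rfl fun b _ => ?_
          ring
        · simp

lemma powerSum_eq_zero {i m : ℕ} (h : m < i) : powerSum F i m = 0 := by
  induction m using Nat.strong_induction_on generalizing i with
  | _ m ih =>
    obtain ⟨i, rfl⟩ := Nat.exists_eq_add_of_lt h
    have := powerSum_add (F := F) monic_X (by simp) (m + i) m
    rw [natDegree_X] at this
    rw [this, sum_eq_zero, neg_zero]
    intro a ha
    have ha := mem_range.1 (mem_filter.1 ha).1
    rw [ih a ha (by omega), mul_zero]

lemma zetaLtOne_zero {d : ℕ} (hd : 0 < d) : zetaLtOne F d 0 = 1 := by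
  have hrange : {i : ℕ | i < d} = ↑(range d) := by ext; simp
  rw [zetaLtOne, hrange, finsum_mem_coe_finset,
    sum_eq_single_of_mem 0 (mem_range.2 hd) fun i _ hi => powerSum_eq_zero (Nat.pos_of_ne_zero hi),
    powerSum_eq_sum]
  have h : monics F 0 = {1} := by
    ext n
    rw [mem_monics, mem_singleton]
    exact ⟨fun h => h.1.natDegree_eq_zero.1 h.2, fun h => by simp [h]⟩
  simp [h]

lemma powerSumV_add_eq_sub {v : F[X]} (hv : v.Monic) (i m : ℕ) :
    powerSumV F v (i + v.natDegree) m =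
      powerSum F (i + v.natDegree) m - v ^ m * powerSum F i m := by
  classical
  rw [powerSumV_eq_sum, powerSum_eq_sum, powerSum_eq_sum, eq_sub_iff_add_eq,
    ← sum_filter_not_add_sum_filter (monics F (i + v.natDegree)) (fun n => v ∣ n) (· ^ m)]
  congr 1
  rw [mul_sum]
  refine sum_bij (fun b _ => v * b) ?_ ?_ ?_ ?_
  · intro b hb
    rw [mem_monics] at hb
    rw [mem_filter, mem_monics]
    exact ⟨⟨hv.mul hb.1, by rw [hv.natDegree_mul hb.1, hb.2, add_comm]⟩, dvd_mul_right _ _⟩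
  · intro b _ b' _ h
    exact mul_left_cancel₀ hv.ne_zero h
  · intro n hn
    rw [mem_filter, mem_monics] at hn
    obtain ⟨⟨hn, hdeg⟩, b, rfl⟩ := hn
    have hb := hv.of_mul_monic_left hn
    rw [hv.natDegree_mul hb] at hdeg
    exact ⟨b, mem_monics.2 ⟨hb, by omega⟩, rfl⟩
  · intro b _
    rw [mul_pow]

lemma powerSumV_add {v : F[X]} (hv : v.Monic) (hd : 0 < v.natDegree) (i m : ℕ) :
    powerSumV F v (i + v.natDegree) m =
      -∑ a ∈ range (m + 1) with Fintype.card F - 1 ∣ m - a,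
        powerSumCoeff v m a * powerSum F i a := by
  rw [powerSumV_add_eq_sub hv, powerSum_add hv hd, sum_filter, sum_filter, sum_range_succ]
  simp [powerSumCoeff, zetaLtOne_zero hd]
  ring

lemma powerSumV_of_lt {v : F[X]} {i : ℕ} (hi : i < v.natDegree) (m : ℕ) :
    powerSumV F v i m = powerSum F i m := by
  classical
  rw [powerSumV_eq_sum, powerSum_eq_sum, filter_true_of_mem]
  intro n hn hdvd
  rw [mem_monics] at hn
  have := natDegree_le_of_dvd hdvd hn.1.ne_zero
  omega

lemma powerSumV_eq_zero {v : F[X]} (hv : v.Monic) {i m : ℕ} (h : m + v.natDegree < i) :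
    powerSumV F v i m = 0 := by
  obtain ⟨i, rfl⟩ := Nat.exists_eq_add_of_le' (show v.natDegree ≤ i by omega)
  rw [powerSumV_add_eq_sub hv, powerSum_eq_zero (by omega), powerSum_eq_zero (by omega)]
  simp

end PowerSum

section ExtendZero

open Finset

/-- Extension by zero of a tuple to a sequence. -/
def extendZero {l : ℕ} (a : Fin l → ℕ) (j : ℕ) : ℕ := if h : j < l then a ⟨j, h⟩ else 0

lemma extendZero_val {l : ℕ} (a : Fin l → ℕ) (j : Fin l) : extendZero a j = a j := by
  simp [extendZero]

lemma finsum_mem_extendZero {R : Type*} [AddCommMonoid R] (l : ℕ) (m : ℕ → ℕ) (q : ℕ)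
    (f : (ℕ → ℕ) → R) :
    ∑ᶠ a ∈ {a : ℕ → ℕ | (∀ j < l, a j ≤ m j ∧ q ∣ (m j - a j)) ∧
        (∃ j < l, a j = m j) ∧ ∀ j, l ≤ j → a j = 0}, f a =
      ∑ a ∈ (Fintype.piFinset fun j : Fin l => {a ∈ range (m j + 1) | q ∣ m j - a}) with
        ¬ ∀ j : Fin l, a j ≠ m j, f (extendZero a) := by
  rw [← finsum_mem_coe_finset]
  symm
  refine finsum_mem_eq_of_bijOn extendZero ⟨?_, ?_, ?_⟩ fun _ _ => rfl
  · intro a ha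
    simp only [coe_filter, Fintype.mem_piFinset, mem_filter, mem_range, Set.mem_ofPred_eq,
      not_forall, not_not] at ha ⊢
    obtain ⟨ha, j, hj⟩ := ha
    refine ⟨fun j hj => ?_, ⟨j, j.2, by rw [extendZero_val, hj]⟩, fun j hj => ?_⟩
    · have := extendZero_val a ⟨j, hj⟩
      have h := ha ⟨j, hj⟩
      simp only at this h
      rw [this]
      exact ⟨by omega, h.2⟩
    · exact dif_neg (by omega)
  · intro a _ b _ hab
    ext j
    rw [← extendZero_val a, hab, extendZero_val]
  · rintro a ⟨ha, ⟨k, hk, hkm⟩, h0⟩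
    refine ⟨fun j => a j, ?_, ?_⟩
    · simp only [coe_filter, Fintype.mem_piFinset, mem_filter, mem_range, Set.mem_ofPred_eq,
        not_forall, not_not]
      exact ⟨fun j => ⟨Nat.lt_succ_of_le (ha j j.2).1, (ha j j.2).2⟩, ⟨k, hk⟩, hkm⟩
    · ext j
      by_cases hj : j < l
      · simp [extendZero, hj]
      · simp [extendZero, hj, h0 j (not_lt.1 hj)]

end ExtendZero

section Zeta

open Finset

variable {F : Type*} [Field F] [Fintype F]

lemma zetaInf_eq_strictAntiSum (r : ℕ) (m : ℕ → ℕ) (N : ℕ) (H : ∀ j < r, m j < N) :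
    zetaInf F r m = strictAntiSum r (fun j i => powerSum F i (m j)) N :=
  finsum_strictAnti_eq r (fun j i => powerSum F i (m j)) N fun j hj _ hi =>
    powerSum_eq_zero ((H j hj).trans_le hi)

lemma zetaV_eq_strictAntiSum {v : F[X]} (hv : v.Monic) (r : ℕ) (m : ℕ → ℕ) (N : ℕ)
    (H : ∀ j < r, m j < N) :
    zetaV F v r m = strictAntiSum r (fun j i => powerSumV F v i (m j)) (N + v.natDegree) :=
  finsum_strictAnti_eq r (fun j i => powerSumV F v i (m j)) _ fun j hj _ hi =>
    powerSumV_eq_zero hv (by have := H j hj; omega)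

lemma zetaLt_eq_strictAntiSum (d r : ℕ) (m : ℕ → ℕ) :
    zetaLt F d r m = strictAntiSum r (fun j i => powerSum F i (m j)) d := by
  rw [zetaLt, strictAntiSum, ← finsum_mem_coe_finset]
  congr! 3
  simp [and_comm]

lemma prod_powerSumCoeff_mul_sum (v : F[X]) {l N : ℕ} (m : ℕ → ℕ) (a : Fin l → ℕ)
    (H : ∀ j, a j < N) :
    (∏ j : Fin l, powerSumCoeff v (m j) (a j)) *
        ∑ i ∈ (Fintype.piFinset fun _ : Fin l => range N) with StrictAnti i,
          ∏ j : Fin l, powerSum F (i j) (a j) =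
      v ^ (∑ j ∈ range l, extendZero a j) *
        (∏ j ∈ range l, zetaLtOne F v.natDegree (m j - extendZero a j) *
          (Nat.choose (m j) (extendZero a j) : F[X])) * zetaInf F l (extendZero a) := by
  have ha : ∀ j < l, extendZero a j < N := fun j hj => by
    simpa [extendZero, hj] using H ⟨j, hj⟩
  rw [zetaInf_eq_strictAntiSum l _ N ha, strictAntiSum, ← prod_pow_eq_pow_sum,
    ← prod_mul_distrib, prod_range]
  simp only [extendZero_val, powerSumCoeff]

lemma strictAntiSum_powerSumV_sub_powerSum {v : F[X]} (hv : v.Monic) (hd : 0 < v.natDegree)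
    (l N : ℕ) (m : ℕ → ℕ) (H : ∀ j < l, m j < N) :
    strictAntiSum l (fun j i => powerSumV F v (i + v.natDegree) (m j)) N -
        strictAntiSum l (fun j i => powerSum F (i + v.natDegree) (m j)) N =
      (-1) ^ l * ∑ a ∈ (Fintype.piFinset fun j : Fin l =>
          {a ∈ range (m j + 1) | Fintype.card F - 1 ∣ m j - a}) with
        ¬ ∀ j : Fin l, a j ≠ m j,
          v ^ (∑ j ∈ range l, extendZero a j) *
            (∏ j ∈ range l, zetaLtOne F v.natDegree (m j - extendZero a j) *
              (Nat.choose (m j) (extendZero a j) : F[X])) * zetaInf F l (extendZero a) := by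
  simp_rw [powerSumV_add hv hd, powerSum_add hv hd]
  have hlt : (Fintype.piFinset fun j : Fin l =>
        {a ∈ range (m j) | Fintype.card F - 1 ∣ m j - a}) =
      {a ∈ Fintype.piFinset fun j : Fin l =>
        {a ∈ range (m j + 1) | Fintype.card F - 1 ∣ m j - a} | ∀ j : Fin l, a j ≠ m j} := by
    ext a
    simp only [Fintype.mem_piFinset, mem_filter, mem_range, ← forall_and]
    refine forall_congr' fun j => ?_
    rw [and_right_comm]
    exact and_congr_left fun _ => by omega
  rw [strictAntiSum_neg_sum_mul l
      (fun j => {a ∈ range (m j + 1) | Fintype.card F - 1 ∣ m j - a})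
      (fun j => powerSumCoeff v (m j)) (powerSum F),
    strictAntiSum_neg_sum_mul l
      (fun j => {a ∈ range (m j) | Fintype.card F - 1 ∣ m j - a})
      (fun j => powerSumCoeff v (m j)) (powerSum F), hlt, ← mul_sub]
  congr 1
  rw [sub_eq_iff_eq_add', ← sum_filter_add_sum_filter_not
    (Fintype.piFinset fun j : Fin l => {a ∈ range (m j + 1) | Fintype.card F - 1 ∣ m j - a})
    fun a => ∀ j : Fin l, a j ≠ m j, add_right_inj]
  refine sum_congr rfl fun a ha => prod_powerSumCoeff_mul_sum v m a fun j => ?_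
  have haj := Fintype.mem_piFinset.1 (mem_filter.1 ha).1 j
  have hj := H j j.2
  rw [mem_filter, mem_range] at haj
  omega

end Zeta

/-- Difference formula relating v-adic and ∞-adic multiple zeta values at negative
integers.  The inner sum runs over tuples `(a_1, …, a_l)` (encoded as functions
`a : ℕ → ℕ` vanishing from index `l` on) with `0 ≤ a_j ≤ m_j`, `(q-1) ∣ (m_j - a_j)`,
and `a_j = m_j` for at least one `j`; in particular the `l = 0` summand is `0`. -/
theorem zetaV_sub_zetaInf (F : Type*) [Field F] [Fintype F] (v : Polynomial F)
    (hv : v.Monic) (hvirr : Irreducible v) (hd : 0 < v.natDegree) (r : ℕ) (hr : 1 ≤ r)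
    (m : ℕ → ℕ) :
    zetaV F v r m - zetaInf F r m =
      ∑ l ∈ Finset.range (r + 1),
        (-1 : Polynomial F) ^ l * zetaLt F v.natDegree (r - l) (fun j => m (l + j)) *
          ∑ᶠ a ∈ {a : ℕ → ℕ |
              (∀ j < l, a j ≤ m j ∧ (Fintype.card F - 1) ∣ (m j - a j)) ∧
                (∃ j < l, a j = m j) ∧ ∀ j, l ≤ j → a j = 0},
            v ^ (∑ j ∈ Finset.range l, a j) *
              (∏ j ∈ Finset.range l,
                zetaLtOne F v.natDegree (m j - a j) * (Nat.choose (m j) (a j) : Polynomial F)) *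
              zetaInf F l a := by
  obtain ⟨N, hN⟩ : ∃ N, ∀ j < r, m j < N :=
    ⟨(Finset.range r).sup m + 1, fun j hj =>
      Nat.lt_succ_of_le (Finset.le_sup (Finset.mem_range.2 hj))⟩
  rw [zetaV_eq_strictAntiSum hv r m N hN,
    zetaInf_eq_strictAntiSum r m (N + v.natDegree) fun j hj => (hN j hj).trans_le (by omega),
    strictAntiSum_add, strictAntiSum_add, ← Finset.sum_sub_distrib]
  refine Finset.sum_congr rfl fun l hl => ?_
  have hlr : l ≤ r := Nat.lt_succ_iff.1 (Finset.mem_range.1 hl)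
  have htail : strictAntiSum (r - l) (fun j i => powerSumV F v i (m (l + j))) v.natDegree =
      strictAntiSum (r - l) (fun j i => powerSum F i (m (l + j))) v.natDegree :=
    strictAntiSum_congr fun j _ i hi => powerSumV_of_lt hi (m (l + j))
  rw [htail, ← sub_mul, strictAntiSum_powerSumV_sub_powerSum hv hd l N m
      fun j hj => hN j (hj.trans_le hlr),
    zetaLt_eq_strictAntiSum, finsum_mem_extendZero, mul_right_comm]
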